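/- Let n ≥ 5, let f be a γ_R-function of the generalized Petersen graph P(n,2) with minimum cardinality of V₂, and let i be an integer. If r_f(V′(i,7)) ≤ 1/2, then v_{i+2} ∉ V₂ and v_{i+4} ∉ V₂ (indices modulo n). -/

import Mathlib

/-!
The statement follows from a local one: if `v_c ∈ V₂`, then `r_f` is at least `1` on the five
columns `c - 2, …, c + 2`. For `c = i + 2` and `c = i + 4` these columns lie in `V'(i,7)`, and
`r_f` is nonnegative everywhere. Five columns are distinct modulo `n` for every `n ≥ 5`, so no small
`n` is special.

Replacement arguments give three properties of a `γ_R`-function `f` with `|V₂|` minimum: a vertex of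
`V₁` has no neighbour in `V₂` (`IsMinimalGamma.one_not_adj_two`), `V₂` is independent
(`IsMinimalGamma.two_not_adj_two`), and a vertex of `V₂` does not have two neighbours that are also
dominated from elsewhere (`IsMinimalGamma.private_neighbors`).

Say that a vertex has excess if it is in `V₁`, or in `V₀` with at least two neighbours in `V₂`; each
such vertex contributes at least `1/2` to `r_f`, so `r_f ≤ 1/2` leaves room for only one of them.
Take `c = 0` and `v_0 ∈ V₂`. Putting any of `u_{±1}`, `v_{±2}`, `u_{±2}` in `V₂` creates an excess
next to `v_0`, and domination then forces a contradiction. With none of them in `V₂`, the vertices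
`v_2` and `u_1`, if both in `V₀`, must be dominated by the adjacent vertices `v_3` and `u_3`, which
is impossible; so one of `v_2`, `u_1` is in `V₁`. The same holds on the left, giving two excesses
(`LocalRoman.a_zero_ne_two`).
-/

/-- The generalized Petersen graph `P(n,k)`: vertices `Sum.inl i` are the outer
vertices `v_i` and `Sum.inr i` are the inner vertices `u_i` (indices in `ZMod n`);
edges are `v_i v_{i+1}`, `v_i u_i` and `u_i u_{i+k}`. -/
def petersen (n k : ℕ) : SimpleGraph (ZMod n ⊕ ZMod n) :=
  SimpleGraph.fromRel fun a b =>
    match a, b with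
    | Sum.inl i, Sum.inl j => j = i + 1
    | Sum.inl i, Sum.inr j => j = i
    | Sum.inr i, Sum.inr j => j = i + (k : ZMod n)
    | _, _ => False

/-- `f` is a Roman domination function on `G`. -/
def IsRDF {V : Type*} (G : SimpleGraph V) (f : V → ℕ) : Prop :=
  (∀ v, f v ≤ 2) ∧ ∀ v, f v = 0 → ∃ u, G.Adj v u ∧ f u = 2

/-- The weight of a function on the vertices. -/
noncomputable def weight {V : Type*} (f : V → ℕ) : ℕ := ∑ᶠ v, f v

/-- The Roman domination number of `G`. -/
noncomputable def romanDomNum {V : Type*} (G : SimpleGraph V) : ℕ :=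
  sInf {w | ∃ f : V → ℕ, IsRDF G f ∧ weight f = w}

/-- `f` is a `γ_R`-function of `G`: an RDF of minimum weight. -/
def IsGammaRFun {V : Type*} (G : SimpleGraph V) (f : V → ℕ) : Prop :=
  IsRDF G f ∧ weight f = romanDomNum G

/-- `S` is a dominating set of `G`. -/
def IsDomSet {V : Type*} (G : SimpleGraph V) (S : Set V) : Prop :=
  ∀ v, v ∈ S ∨ ∃ u ∈ S, G.Adj u v

/-- The domination number of `G`. -/
noncomputable def domNum {V : Type*} (G : SimpleGraph V) : ℕ :=
  sInf {k | ∃ S : Set V, IsDomSet G S ∧ S.ncard = k}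

/-- The function `g_f` associated to an RDF `f` on `P(n,2)`. -/
noncomputable def gf (n : ℕ) (f : ZMod n ⊕ ZMod n → ℕ) (w : ZMod n ⊕ ZMod n) : ℚ :=
  if f w = 2 then 1/2
  else if f w = 1 then 1
  else (1/2) * (((petersen n 2).neighborSet w) ∩ {u | f u = 2}).ncard

/-- `r_f(S) = Σ_{w ∈ S} (g_f(w) - 1/2)`. -/
noncomputable def rfSum (n : ℕ) (f : ZMod n ⊕ ZMod n → ℕ) (S : Set (ZMod n ⊕ ZMod n)) : ℚ :=
  ∑ᶠ w ∈ S, (gf n f w - 1/2)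

/-- The block `V'(i,t) = {v_j, u_j : i ≤ j ≤ i+t-1}`, indices modulo `n`. -/
def Vblock (n : ℕ) (i : ℤ) (t : ℕ) : Set (ZMod n ⊕ ZMod n) :=
  {w | ∃ j : ℤ, i ≤ j ∧ j ≤ i + t - 1 ∧
    (w = Sum.inl ((j : ℤ) : ZMod n) ∨ w = Sum.inr ((j : ℤ) : ZMod n))}

/-- `f` has minimum cardinality of `V₂` among `γ_R`-functions of `P(n,2)`. -/
def MinV2 (n : ℕ) (f : ZMod n ⊕ ZMod n → ℕ) : Prop :=
  ∀ f' : ZMod n ⊕ ZMod n → ℕ, IsGammaRFun (petersen n 2) f' →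
    {v | f v = 2}.ncard ≤ {v | f' v = 2}.ncard

/-! ### Replacement arguments in a general graph -/

section Replacement

variable {V : Type*} {G : SimpleGraph V} {f g : V → ℕ}

lemma IsGammaRFun.weight_le (hf : IsGammaRFun G f) (hg : IsRDF G g) : weight f ≤ weight g :=
  hf.2.trans_le (Nat.sInf_le ⟨g, hg, rfl⟩)

/-- `f` is a `γ_R`-function of `G` whose set `V₂` has the least cardinality; for `P(n,2)` the second
component is `MinV2`. -/
def IsMinimalGamma (G : SimpleGraph V) (f : V → ℕ) : Prop :=
  IsGammaRFun G f ∧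
    ∀ f' : V → ℕ, IsGammaRFun G f' → {v | f v = 2}.ncard ≤ {v | f' v = 2}.ncard

/-- A minimal `γ_R`-function cannot be replaced, at no extra weight, by a Roman domination
function whose set `V₂` is strictly smaller. -/
lemma IsMinimalGamma.not_replace [Finite V] (hf : IsMinimalGamma G f) (hg : IsRDF G g)
    (hw : weight g ≤ weight f) {x : V} (hx : f x = 2) (hgx : g x ≠ 2)
    (hsub : ∀ v, g v = 2 → f v = 2) : False := by
  have hle := hf.2 g ⟨hg, (hw.antisymm (hf.1.weight_le hg)).trans hf.1.2⟩
  have hss : {v | g v = 2} ⊂ {v | f v = 2} :=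
    ⟨fun v hv => hsub v hv, fun h => hgx (h hx)⟩
  exact absurd (Set.ncard_lt_ncard hss) (not_lt.mpr hle)

/-- A vertex of `V₁` has no neighbour in `V₂`, since otherwise its value could drop to `0`. -/
lemma IsMinimalGamma.one_not_adj_two [Finite V] (hf : IsMinimalGamma G f) {x y : V}
    (hxy : G.Adj x y) (hx : f x = 1) (hy : f y = 2) : False := by
  classical
  have := Fintype.ofFinite V
  have hg : IsRDF G (Function.update f x 0) := by
    refine ⟨fun v => ?_, fun v hv => ?_⟩
    · have := hf.1.1.1 v
      rw [Function.update_apply]; split_ifs <;> omega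
    · by_cases hvx : v = x
      · subst hvx
        exact ⟨y, hxy, by rw [Function.update_of_ne hxy.ne', hy]⟩
      · rw [Function.update_of_ne hvx] at hv
        obtain ⟨u, hu, hu2⟩ := hf.1.1.2 v hv
        refine ⟨u, hu, ?_⟩
        rwa [Function.update_of_ne]
        rintro rfl
        omega
  have hle := hf.1.weight_le hg
  have hlt : weight (Function.update f x 0) < weight f := by
    simp only [weight, finsum_eq_sum_of_fintype]
    refine Finset.sum_lt_sum (fun v _ => ?_) ⟨x, Finset.mem_univ x, by simp [hx]⟩
    rw [Function.update_apply]; split_ifs <;> omega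
  omega

/-- `V₂` is independent in a cubic graph: if `x` and its neighbour `y` both had value `2`, then `x`
could receive `0` and its two other neighbours at least `1`. -/
lemma IsMinimalGamma.two_not_adj_two [Finite V] (hf : IsMinimalGamma G f) {x y p q : V}
    (hN : ∀ v, G.Adj x v → v = y ∨ v = p ∨ v = q)
    (hxy : G.Adj x y) (hx : f x = 2) (hy : f y = 2) : False := by
  classical
  have := Fintype.ofFinite V
  set g : V → ℕ := fun v => if v = x then 0 else if v = p ∨ v = q then max (f v) 1 else f v with hgdef
  have hgx : g x = 0 := by simp [hgdef]
  have hkeep : ∀ v, v ≠ x → f v = 2 → g v = 2 := by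
    intro v hv h2
    simp [hgdef, hv, h2]
  have hback : ∀ v, g v = 2 → f v = 2 := by
    intro v hv
    simp only [hgdef] at hv
    split_ifs at hv <;> omega
  have hg : IsRDF G g := by
    refine ⟨fun v => ?_, fun v hv => ?_⟩
    · have := hf.1.1.1 v
      simp only [hgdef]; split_ifs <;> omega
    · by_cases hvx : v = x
      · subst hvx
        exact ⟨y, hxy, hkeep y hxy.ne' hy⟩
      · by_cases hpq : v = p ∨ v = q
        · simp [hgdef, hvx, hpq] at hv
        · have hv0 : f v = 0 := by simpa [hgdef, hvx, hpq] using hv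
          obtain ⟨u, hu, hu2⟩ := hf.1.1.2 v hv0
          refine ⟨u, hu, hkeep u ?_ hu2⟩
          rintro rfl
          rcases hN v hu.symm with rfl | h
          · omega
          · exact hpq h
  refine hf.not_replace hg ?_ hx (by omega) hback
  have hpt : ∀ v, g v + (if v = x then 2 else 0) ≤
      f v + ((if v = p then 1 else 0) + (if v = q then 1 else 0)) := by
    intro v
    simp only [hgdef]
    grind
  have hsum := Finset.sum_le_sum (fun v (_ : v ∈ Finset.univ) => hpt v)
  simp only [Finset.sum_add_distrib, Finset.sum_ite_eq', Finset.mem_univ, if_true] at hsum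
  simp only [weight, finsum_eq_sum_of_fintype]
  omega

/-- A vertex `x ∈ V₂` of a cubic graph has at least two private neighbours: if two neighbours
`y`, `z` of `x` were also dominated from elsewhere, then `x` and its third neighbour `p` could
both receive `1`. -/
lemma IsMinimalGamma.private_neighbors [Finite V] (hf : IsMinimalGamma G f) {x y z p y' z' : V}
    (hN : ∀ v, G.Adj x v → v = y ∨ v = z ∨ v = p) (hx : f x = 2) (hp : f p = 0)
    (hy : G.Adj y y') (hyx : y' ≠ x) (hy2 : f y' = 2)
    (hz : G.Adj z z') (hzx : z' ≠ x) (hz2 : f z' = 2) : False := by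
  classical
  have := Fintype.ofFinite V
  set g : V → ℕ := fun v => if v = x ∨ v = p then 1 else f v with hgdef
  have hgx : g x = 1 := by simp [hgdef]
  have hkeep : ∀ v, v ≠ x → f v = 2 → g v = 2 := by
    intro v hv h2
    have : v ≠ p := by rintro rfl; omega
    simp [hgdef, hv, this, h2]
  have hback : ∀ v, g v = 2 → f v = 2 := by
    intro v hv
    simp only [hgdef] at hv
    split_ifs at hv <;> omega
  have hg : IsRDF G g := by
    refine ⟨fun v => ?_, fun v hv => ?_⟩
    · have := hf.1.1.1 v
      simp only [hgdef]; split_ifs <;> omega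
    · by_cases hvx : v = x ∨ v = p
      · simp [hgdef, hvx] at hv
      · have hv0 : f v = 0 := by simpa [hgdef, hvx] using hv
        obtain ⟨u, hu, hu2⟩ := hf.1.1.2 v hv0
        by_cases hux : u = x
        · subst hux
          rcases hN v hu.symm with rfl | rfl | h
          · exact ⟨y', hy, hkeep y' hyx hy2⟩
          · exact ⟨z', hz, hkeep z' hzx hz2⟩
          · exact absurd (Or.inr h) hvx
        · exact ⟨u, hu, hkeep u hux hu2⟩
  refine hf.not_replace hg ?_ hx (by omega) hback
  have hpt : ∀ v, g v + (if v = x then 1 else 0) ≤ f v + (if v = p then 1 else 0) := by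
    intro v
    simp only [hgdef]
    grind
  have hsum := Finset.sum_le_sum (fun v (_ : v ∈ Finset.univ) => hpt v)
  simp only [Finset.sum_add_distrib, Finset.sum_ite_eq', Finset.mem_univ, if_true] at hsum
  simp only [weight, finsum_eq_sum_of_fintype]
  omega

end Replacement

/-! ### The five-column argument -/

/-- At least two of three values equal `2`. -/
def TwoTwos (p q r : ℕ) : Prop := (p = 2 ∧ q = 2) ∨ (p = 2 ∧ r = 2) ∨ (q = 2 ∧ r = 2)

/-- A vertex with value `c` and neighbours valued `p, q, r` contributes at least `1/2` to `r_f`. -/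
def Excess (c p q r : ℕ) : Prop := c = 1 ∨ (c = 0 ∧ TwoTwos p q r)

/-- The local conditions used around column `0`, for the values `a j` of `v_{c+j}` and `b j` of
`u_{c+j}`, unrolled along `ℤ`: a minimal `γ_R`-function satisfies the first seven fields, and the
remaining ones follow when `r_f` is at most `1/2` on the columns `-2, …, 2`. In `priv_b`, the
neighbours of `u_j` that are dominated from elsewhere are `v_j` and one of `u_{j ± 2}`. -/
structure LocalRoman (a b : ℤ → ℕ) : Prop where
  a_le : ∀ j, a j ≤ 2
  b_le : ∀ j, b j ≤ 2
  dom_a : ∀ j, a j = 0 → a (j - 1) = 2 ∨ a (j + 1) = 2 ∨ b j = 2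
  dom_b : ∀ j, b j = 0 → b (j - 2) = 2 ∨ b (j + 2) = 2 ∨ a j = 2
  nbr_a : ∀ j, a j = 2 → a (j - 1) = 0 ∧ a (j + 1) = 0 ∧ b j = 0
  nbr_b : ∀ j, b j = 2 → b (j - 2) = 0 ∧ b (j + 2) = 0 ∧ a j = 0
  priv_b : ∀ j, b j = 2 → (a (j - 1) = 2 ∨ a (j + 1) = 2) →
    (a (j - 2) = 2 ∨ a (j + 2) = 2) → False
  exc_aa : ∀ s t, |s| ≤ 2 → |t| ≤ 2 → s ≠ t → Excess (a s) (a (s - 1)) (a (s + 1)) (b s) →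
    Excess (a t) (a (t - 1)) (a (t + 1)) (b t) → False
  exc_ab : ∀ s t, |s| ≤ 2 → |t| ≤ 2 → Excess (a s) (a (s - 1)) (a (s + 1)) (b s) →
    Excess (b t) (b (t - 2)) (b (t + 2)) (a t) → False
  exc_bb : ∀ s t, |s| ≤ 2 → |t| ≤ 2 → s ≠ t → Excess (b s) (b (s - 2)) (b (s + 2)) (a s) →
    Excess (b t) (b (t - 2)) (b (t + 2)) (a t) → False
  triple_a : ∀ s, |s| ≤ 2 → a s = 0 → a (s - 1) = 2 → a (s + 1) = 2 → b s = 2 → False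
  triple_b : ∀ s, |s| ≤ 2 → b s = 0 → b (s - 2) = 2 → b (s + 2) = 2 → a s = 2 → False

namespace LocalRoman

variable {a b : ℤ → ℕ}

lemma reflect (h : LocalRoman a b) : LocalRoman (fun j => a (-j)) (fun j => b (-j)) := by
  have e1 : ∀ j : ℤ, -(j - 1) = -j + 1 := fun j => by ring
  have e2 : ∀ j : ℤ, -(j + 1) = -j - 1 := fun j => by ring
  have e3 : ∀ j : ℤ, -(j - 2) = -j + 2 := fun j => by ring
  have e4 : ∀ j : ℤ, -(j + 2) = -j - 2 := fun j => by ring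
  have hex : ∀ c p q r, Excess c p q r → Excess c q p r := by
    unfold Excess TwoTwos; intros; omega
  have habs : ∀ s : ℤ, |s| ≤ 2 → |-s| ≤ 2 := fun s hs => by rwa [abs_neg]
  constructor <;> try simp only [e1, e2, e3, e4]
  · exact fun j => h.a_le _
  · exact fun j => h.b_le _
  · intro j hj; have := h.dom_a _ hj; tauto
  · intro j hj; have := h.dom_b _ hj; tauto
  · intro j hj; have := h.nbr_a _ hj; tauto
  · intro j hj; have := h.nbr_b _ hj; tauto
  · intro j hj h1 h2; exact h.priv_b _ hj h1.symm h2.symm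
  · intro s t hs ht hst h1 h2
    exact h.exc_aa _ _ (habs s hs) (habs t ht) (by omega) (hex _ _ _ _ h1) (hex _ _ _ _ h2)
  · intro s t hs ht h1 h2
    exact h.exc_ab _ _ (habs s hs) (habs t ht) (hex _ _ _ _ h1) (hex _ _ _ _ h2)
  · intro s t hs ht hst h1 h2
    exact h.exc_bb _ _ (habs s hs) (habs t ht) (by omega) (hex _ _ _ _ h1) (hex _ _ _ _ h2)
  · intro s hs h0 h1 h2 h3; exact h.triple_a _ (habs s hs) h0 h2 h1 h3
  · intro s hs h0 h1 h2 h3; exact h.triple_b _ (habs s hs) h0 h2 h1 h3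

/-- `u_1 ∉ V₂`. Otherwise `v_1` carries the only excess, so `v_2` is dominated by `v_3` alone, and
then `v_1` and `u_3` are both non-private neighbours of `u_1`. -/
lemma b_one_ne_two (h : LocalRoman a b) (h0 : a 0 = 2) : b 1 ≠ 2 := by
  intro h1
  have nbr := h.nbr_a 0 h0
  have triple := h.triple_a 1
  have exc_v2 := h.exc_aa 1 2
  have exc_u0 := h.exc_ab 1 0
  have dom := h.dom_a 2
  have priv := h.priv_b 1 h1
  have le := h.a_le 2
  norm_num [Excess, TwoTwos, abs_le] at nbr triple exc_v2 exc_u0 dom priv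
  grind

lemma b_neg_one_ne_two (h : LocalRoman a b) (h0 : a 0 = 2) : b (-1) ≠ 2 :=
  h.reflect.b_one_ne_two h0

/-- If neither `v_2` nor `u_2` is in `V₂`, then one of `v_2`, `u_1` is in `V₁`: otherwise `v_3` and
`u_3` would be adjacent vertices of `V₂`. -/
lemma right_one (h : LocalRoman a b) (h0 : a 0 = 2) (ha : a 2 ≠ 2) (hb : b 2 ≠ 2) :
    a 2 = 1 ∨ b 1 = 1 := by
  have nbr := h.nbr_a 0 h0
  have u1 := h.b_one_ne_two h0
  have u1' := h.b_neg_one_ne_two h0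
  have le_v2 := h.a_le 2
  have le_u1 := h.b_le 1
  have dom_v2 := h.dom_a 2
  have dom_u1 := h.dom_b 1
  have nbr_v3 := h.nbr_a 3
  norm_num at nbr dom_v2 dom_u1 nbr_v3
  grind

lemma left_one (h : LocalRoman a b) (h0 : a 0 = 2) (ha : a (-2) ≠ 2) (hb : b (-2) ≠ 2) :
    a (-2) = 1 ∨ b (-1) = 1 :=
  h.reflect.right_one h0 ha hb

/-- `v_2 ∉ V₂`. Otherwise `v_1` has excess, hence no vertex on the left has. -/
lemma a_two_ne_two (h : LocalRoman a b) (h0 : a 0 = 2) : a 2 ≠ 2 := by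
  intro h2
  have nbr := h.nbr_a 0 h0
  have left := h.left_one h0
  have exc_v1' := h.exc_aa 1 (-1)
  have exc_v2' := h.exc_aa 1 (-2)
  have exc_u0 := h.exc_ab 1 0
  have exc_u1' := h.exc_ab 1 (-1)
  norm_num [Excess, TwoTwos, abs_le] at nbr exc_v1' exc_v2' exc_u0 exc_u1'
  grind

lemma a_neg_two_ne_two (h : LocalRoman a b) (h0 : a 0 = 2) : a (-2) ≠ 2 :=
  h.reflect.a_two_ne_two h0

/-- `u_2 ∉ V₂`. Otherwise `u_0` has excess, hence no vertex on the left has. -/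
lemma b_two_ne_two (h : LocalRoman a b) (h0 : a 0 = 2) : b 2 ≠ 2 := by
  intro h2
  have nbr := h.nbr_a 0 h0
  have v2' := h.a_neg_two_ne_two h0
  have left := h.left_one h0 v2'
  have triple := h.triple_b 0
  have exc_v2' := h.exc_ab (-2) 0
  have exc_u1' := h.exc_bb 0 (-1)
  norm_num [Excess, TwoTwos, abs_le] at nbr triple exc_v2' exc_u1'
  grind

lemma b_neg_two_ne_two (h : LocalRoman a b) (h0 : a 0 = 2) : b (-2) ≠ 2 :=
  h.reflect.b_two_ne_two h0

/-- The central outer vertex of five consecutive columns with `r_f ≤ 1/2` is not in `V₂`: otherwise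
there would be a vertex of `V₁` on either side of it. -/
lemma a_zero_ne_two (h : LocalRoman a b) : a 0 ≠ 2 := by
  intro h0
  have right := h.right_one h0 (h.a_two_ne_two h0) (h.b_two_ne_two h0)
  have left := h.left_one h0 (h.a_neg_two_ne_two h0) (h.b_neg_two_ne_two h0)
  have e1 := h.exc_aa 2 (-2)
  have e2 := h.exc_ab 2 (-1)
  have e3 := h.exc_ab (-2) 1
  have e4 := h.exc_bb 1 (-1)
  norm_num [Excess, abs_le] at e1 e2 e3 e4
  grind

end LocalRoman

/-! ### The graph `P(n,2)` -/

lemma zmod_intCast_ne {n : ℕ} {s t : ℤ} (hst : s ≠ t) (h : |s - t| < n) :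
    (s : ZMod n) ≠ (t : ZMod n) := by
  intro he
  have hdvd : (n : ℤ) ∣ s - t := by
    rw [← ZMod.intCast_zmod_eq_zero_iff_dvd]
    push_cast
    rw [he, sub_self]
  exact hst (sub_eq_zero.mp (Int.eq_zero_of_abs_lt_dvd hdvd h))

section Petersen

variable {n : ℕ}

lemma petersen_adj_outer (hn : 5 ≤ n) (j : ℤ) (w : ZMod n ⊕ ZMod n) :
    (petersen n 2).Adj (Sum.inl (j : ZMod n)) w ↔
      w = Sum.inl ((j - 1 : ℤ) : ZMod n) ∨ w = Sum.inl ((j + 1 : ℤ) : ZMod n) ∨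
        w = Sum.inr (j : ZMod n) := by
  have h1 : (1 : ZMod n) ≠ 0 := by
    simpa using zmod_intCast_ne (n := n) (s := 1) (t := 0) (by norm_num) (by norm_num; omega)
  rcases w with k | k
  · simp only [petersen, SimpleGraph.fromRel_adj, Sum.inl.injEq, ne_eq, reduceCtorEq, or_false]
    push_cast
    grind
  · simp only [petersen, SimpleGraph.fromRel_adj, Sum.inr.injEq, ne_eq, reduceCtorEq, or_false,
      false_or, not_false_eq_true, true_and]

lemma petersen_adj_inner (hn : 5 ≤ n) (j : ℤ) (w : ZMod n ⊕ ZMod n) :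
    (petersen n 2).Adj (Sum.inr (j : ZMod n)) w ↔
      w = Sum.inr ((j - 2 : ℤ) : ZMod n) ∨ w = Sum.inr ((j + 2 : ℤ) : ZMod n) ∨
        w = Sum.inl (j : ZMod n) := by
  have h2 : (2 : ZMod n) ≠ 0 := by
    simpa using zmod_intCast_ne (n := n) (s := 2) (t := 0) (by norm_num) (by norm_num; omega)
  rcases w with k | k
  · simp only [petersen, SimpleGraph.fromRel_adj, Sum.inl.injEq, ne_eq, reduceCtorEq,
      false_or, not_false_eq_true, true_and]
    exact eq_comm
  · simp only [petersen, SimpleGraph.fromRel_adj, Sum.inr.injEq, ne_eq, reduceCtorEq, or_false]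
    push_cast
    grind

end Petersen

/-! ### Lower bounds for `r_f` -/

section Excess

variable {n : ℕ} {f : ZMod n ⊕ ZMod n → ℕ} {w p q s : ZMod n ⊕ ZMod n}

lemma gf_sub_half_of_zero (hw : f w = 0) {k : ℕ}
    (hk : k ≤ (((petersen n 2).neighborSet w) ∩ {u | f u = 2}).ncard) :
    ((k : ℚ) - 1) / 2 ≤ gf n f w - 1 / 2 := by
  have : (k : ℚ) ≤ (((petersen n 2).neighborSet w) ∩ {u | f u = 2}).ncard := by exact_mod_cast hk
  simp only [gf, hw]
  norm_num
  linarith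

lemma gf_sub_half_nonneg [NeZero n] (hf : IsRDF (petersen n 2) f) (w) :
    0 ≤ gf n f w - 1 / 2 := by
  by_cases h0 : f w = 0
  · obtain ⟨u, hu, hu2⟩ := hf.2 w h0
    have := gf_sub_half_of_zero (k := 1) h0 ((Set.ncard_pos (Set.toFinite _)).mpr ⟨u, hu, hu2⟩)
    simpa using this
  · have := hf.1 w
    have : f w = 1 ∨ f w = 2 := by omega
    rcases this with h | h <;> simp [gf, h]
    norm_num

lemma half_le_of_one (hw : f w = 1) : 1 / 2 ≤ gf n f w - 1 / 2 := by
  simp [gf, hw]; norm_num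

lemma half_le_of_two_nbrs [NeZero n] (hw : f w = 0) (hpq : p ≠ q)
    (hp : (petersen n 2).Adj w p) (hq : (petersen n 2).Adj w q) (hp2 : f p = 2) (hq2 : f q = 2) :
    1 / 2 ≤ gf n f w - 1 / 2 := by
  have := gf_sub_half_of_zero (k := 2) hw
    ((Set.one_lt_ncard (Set.toFinite _)).mpr ⟨p, ⟨hp, hp2⟩, q, ⟨hq, hq2⟩, hpq⟩)
  norm_num at this ⊢
  exact this

lemma one_le_of_three_nbrs [NeZero n] (hw : f w = 0) (hpq : p ≠ q) (hps : p ≠ s) (hqs : q ≠ s)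
    (hp : (petersen n 2).Adj w p) (hq : (petersen n 2).Adj w q) (hs : (petersen n 2).Adj w s)
    (hp2 : f p = 2) (hq2 : f q = 2) (hs2 : f s = 2) :
    1 ≤ gf n f w - 1 / 2 := by
  have := gf_sub_half_of_zero (k := 3) hw
    ((Set.two_lt_ncard_iff (Set.toFinite _)).mpr
      ⟨p, q, s, ⟨hp, hp2⟩, ⟨hq, hq2⟩, ⟨hs, hs2⟩, hpq, hps, hqs⟩)
  norm_num at this ⊢
  exact this

lemma half_le_of_excess [NeZero n] (hpq : p ≠ q) (hps : p ≠ s) (hqs : q ≠ s)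
    (hp : (petersen n 2).Adj w p) (hq : (petersen n 2).Adj w q) (hs : (petersen n 2).Adj w s)
    (h : Excess (f w) (f p) (f q) (f s)) : 1 / 2 ≤ gf n f w - 1 / 2 := by
  rcases h with h | ⟨h, ⟨h1, h2⟩ | ⟨h1, h2⟩ | ⟨h1, h2⟩⟩
  · exact half_le_of_one h
  · exact half_le_of_two_nbrs h hpq hp hq h1 h2
  · exact half_le_of_two_nbrs h hps hp hs h1 h2
  · exact half_le_of_two_nbrs h hqs hq hs h1 h2

lemma sum_le_rfSum [NeZero n] (hf : IsRDF (petersen n 2) f) {S : Set (ZMod n ⊕ ZMod n)}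
    (T : Finset (ZMod n ⊕ ZMod n)) (hT : ∀ w ∈ T, w ∈ S) :
    ∑ w ∈ T, (gf n f w - 1 / 2) ≤ rfSum n f S := by
  rw [rfSum, finsum_mem_eq_finite_toFinset_sum _ (Set.toFinite S)]
  exact Finset.sum_le_sum_of_subset_of_nonneg (fun w hw => by simpa using hT w hw)
    (fun w _ _ => gf_sub_half_nonneg hf w)

end Excess

/-- Around every column `c` of a minimal `γ_R`-function of `P(n,2)`, the local conditions hold as
soon as `r_f` is at most `1/2` on a set containing the columns `c - 2, …, c + 2`. As `n ≥ 5`, these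
five columns are distinct modulo `n`. -/
lemma localRoman_of_rfSum_le {n : ℕ} (hn : 5 ≤ n) {f : ZMod n ⊕ ZMod n → ℕ}
    (hf : IsMinimalGamma (petersen n 2) f) {S : Set (ZMod n ⊕ ZMod n)}
    (hS : rfSum n f S ≤ 1 / 2) (c : ℤ)
    (hc : ∀ s : ℤ, |s| ≤ 2 →
      Sum.inl ((c + s : ℤ) : ZMod n) ∈ S ∧ Sum.inr ((c + s : ℤ) : ZMod n) ∈ S) :
    LocalRoman (fun j => f (Sum.inl ((c + j : ℤ) : ZMod n)))
      (fun j => f (Sum.inr ((c + j : ℤ) : ZMod n))) := by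
  have : NeZero n := ⟨by omega⟩
  have hR := hf.1.1
  have adjA := fun j w => (petersen_adj_outer hn (c + j) w)
  have adjB := fun j w => (petersen_adj_inner hn (c + j) w)
  simp only [add_sub_assoc, add_assoc] at adjA adjB
  have A1 := fun j => (adjA j _).mpr (Or.inl rfl)
  have A2 := fun j => (adjA j _).mpr (Or.inr (Or.inl rfl))
  have A3 := fun j => (adjA j _).mpr (Or.inr (Or.inr rfl))
  have B1 := fun j => (adjB j _).mpr (Or.inl rfl)
  have B2 := fun j => (adjB j _).mpr (Or.inr (Or.inl rfl))
  have B3 := fun j => (adjB j _).mpr (Or.inr (Or.inr rfl))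
  have hne : ∀ s t : ℤ, s ≠ t → |s - t| ≤ 4 → ((c + s : ℤ) : ZMod n) ≠ ((c + t : ℤ) : ZMod n) := by
    intro s t hst h
    refine zmod_intCast_ne (by omega) ?_
    rw [add_sub_add_left_eq_sub]
    omega
  have hl : ∀ s t : ℤ, s ≠ t → |s - t| ≤ 4 →
      (Sum.inl ((c + s : ℤ) : ZMod n) : ZMod n ⊕ ZMod n) ≠ Sum.inl ((c + t : ℤ) : ZMod n) :=
    fun s t h1 h2 h => hne s t h1 h2 (Sum.inl.inj h)
  have hr : ∀ s t : ℤ, s ≠ t → |s - t| ≤ 4 →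
      (Sum.inr ((c + s : ℤ) : ZMod n) : ZMod n ⊕ ZMod n) ≠ Sum.inr ((c + t : ℤ) : ZMod n) :=
    fun s t h1 h2 h => hne s t h1 h2 (Sum.inr.inj h)
  have hab : ∀ {s t : ℤ}, |s| ≤ 2 → |t| ≤ 2 → |s - t| ≤ 4 := by
    intro s t hs ht; rw [abs_le] at *; omega
  have d1 : ∀ j : ℤ, j - 1 ≠ j + 1 ∧ |j - 1 - (j + 1)| ≤ 4 := fun j => by
    rw [abs_le]; omega
  have d2 : ∀ j : ℤ, j - 2 ≠ j + 2 ∧ |j - 2 - (j + 2)| ≤ 4 := fun j => by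
    rw [abs_le]; omega
  have excA : ∀ j, _ → 1 / 2 ≤ gf n f (Sum.inl ((c + j : ℤ) : ZMod n)) - 1 / 2 := fun j =>
    half_le_of_excess (hl _ _ (d1 j).1 (d1 j).2) Sum.inl_ne_inr Sum.inl_ne_inr (A1 j) (A2 j) (A3 j)
  have excB : ∀ j, _ → 1 / 2 ≤ gf n f (Sum.inr ((c + j : ℤ) : ZMod n)) - 1 / 2 := fun j =>
    half_le_of_excess (hr _ _ (d2 j).1 (d2 j).2) Sum.inr_ne_inl Sum.inr_ne_inl (B1 j) (B2 j) (B3 j)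
  have pair : ∀ x y, x ≠ y → x ∈ S → y ∈ S → 1 / 2 ≤ gf n f x - 1 / 2 →
      1 / 2 ≤ gf n f y - 1 / 2 → False := by
    intro x y hxy hx hy h1 h2
    have := sum_le_rfSum hR (S := S) {x, y} (by simp [hx, hy])
    rw [Finset.sum_pair hxy] at this
    linarith
  have single : ∀ x ∈ S, 1 ≤ gf n f x - 1 / 2 → False := by
    intro x hx h1
    have := sum_le_rfSum hR (S := S) {x} (by simp [hx])
    rw [Finset.sum_singleton] at this
    linarith
  have zero : ∀ x y p q, (∀ v, (petersen n 2).Adj x v → v = y ∨ v = p ∨ v = q) →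
      (petersen n 2).Adj x y → f x = 2 → f y = 0 := by
    intro x y p q hN hxy hx
    have h2 := hR.1 y
    have h1 : f y ≠ 1 := fun h => hf.one_not_adj_two hxy.symm h hx
    have h3 : f y ≠ 2 := fun h => hf.two_not_adj_two hN hxy hx h
    omega
  have nB : ∀ j, f (Sum.inr ((c + j : ℤ) : ZMod n)) = 2 →
      f (Sum.inr ((c + (j - 2) : ℤ) : ZMod n)) = 0 ∧
      f (Sum.inr ((c + (j + 2) : ℤ) : ZMod n)) = 0 ∧
      f (Sum.inl ((c + j : ℤ) : ZMod n)) = 0 := fun j hj =>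
    ⟨zero _ _ _ _ (fun v hv => (adjB j v).mp hv) (B1 j) hj,
      zero _ _ _ _ (fun v hv => by have := (adjB j v).mp hv; tauto) (B2 j) hj,
      zero _ _ _ _ (fun v hv => by have := (adjB j v).mp hv; tauto) (B3 j) hj⟩
  have hinlr : ∀ {x y : ZMod n}, (Sum.inl x : ZMod n ⊕ ZMod n) ≠ Sum.inr y := Sum.inl_ne_inr
  constructor
  · exact fun j => hR.1 _
  · exact fun j => hR.1 _
  · intro j hj
    obtain ⟨u, hu, hu2⟩ := hR.2 _ hj
    rcases (adjA j u).mp hu with rfl | rfl | rfl <;> tauto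
  · intro j hj
    obtain ⟨u, hu, hu2⟩ := hR.2 _ hj
    rcases (adjB j u).mp hu with rfl | rfl | rfl <;> tauto
  · exact fun j hj => ⟨zero _ _ _ _ (fun v hv => (adjA j v).mp hv) (A1 j) hj,
      zero _ _ _ _ (fun v hv => by have := (adjA j v).mp hv; tauto) (A2 j) hj,
      zero _ _ _ _ (fun v hv => by have := (adjA j v).mp hv; tauto) (A3 j) hj⟩
  · exact nB
  · -- `v_j` is dominated by `v_{j ± 1}`, and `u_{j ± 2}` by `v_{j ± 2}`
    intro j hj h1 h2
    obtain ⟨y', hy, hy2, hyx⟩ : ∃ y', (petersen n 2).Adj (Sum.inl ((c + j : ℤ) : ZMod n)) y' ∧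
        f y' = 2 ∧ y' ≠ Sum.inr ((c + j : ℤ) : ZMod n) := by
      rcases h1 with h | h
      · exact ⟨_, A1 j, h, hinlr⟩
      · exact ⟨_, A2 j, h, hinlr⟩
    rcases h2 with h | h
    · exact hf.private_neighbors (z := Sum.inr ((c + (j - 2) : ℤ) : ZMod n))
        (fun v hv => by have := (adjB j v).mp hv; tauto) hj (nB j hj).2.1 hy hyx hy2
        (B3 (j - 2)) hinlr h
    · exact hf.private_neighbors (z := Sum.inr ((c + (j + 2) : ℤ) : ZMod n))
        (fun v hv => by have := (adjB j v).mp hv; tauto) hj (nB j hj).1 hy hyx hy2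
        (B3 (j + 2)) hinlr h
  · exact fun s t hs ht hst h1 h2 =>
      pair _ _ (hl s t hst (hab hs ht)) (hc s hs).1 (hc t ht).1 (excA s h1) (excA t h2)
  · exact fun s t hs ht h1 h2 =>
      pair _ _ hinlr (hc s hs).1 (hc t ht).2 (excA s h1) (excB t h2)
  · exact fun s t hs ht hst h1 h2 =>
      pair _ _ (hr s t hst (hab hs ht)) (hc s hs).2 (hc t ht).2 (excB s h1) (excB t h2)
  · exact fun s hs h0 h1 h2 h3 => single _ (hc s hs).1
      (one_le_of_three_nbrs h0 (hl _ _ (d1 s).1 (d1 s).2) hinlr hinlr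
        (A1 s) (A2 s) (A3 s) h1 h2 h3)
  · exact fun s hs h0 h1 h2 h3 => single _ (hc s hs).2
      (one_le_of_three_nbrs h0 (hr _ _ (d2 s).1 (d2 s).2) hinlr.symm hinlr.symm
        (B1 s) (B2 s) (B3 s) h1 h2 h3)

/-- If `r_f(V'(i,7)) ≤ 1/2`, then `v_{i+2} ∉ V₂` and `v_{i+4} ∉ V₂`. -/
theorem v_i_add_2_and_4_not_in_V2 (n : ℕ) (hn : 5 ≤ n)
    (f : ZMod n ⊕ ZMod n → ℕ) (hf : IsGammaRFun (petersen n 2) f)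
    (hmin : MinV2 n f) (i : ℤ)
    (h : rfSum n f (Vblock n i 7) ≤ 1/2) :
    f (Sum.inl ((i + 2 : ℤ) : ZMod n)) ≠ 2 ∧
    f (Sum.inl ((i + 4 : ℤ) : ZMod n)) ≠ 2 := by
  have hblock : ∀ c : ℤ, i + 2 ≤ c → c ≤ i + 4 → ∀ s : ℤ, |s| ≤ 2 →
      Sum.inl ((c + s : ℤ) : ZMod n) ∈ Vblock n i 7 ∧
        Sum.inr ((c + s : ℤ) : ZMod n) ∈ Vblock n i 7 := by
    intro c h1 h2 s hs
    rw [abs_le] at hs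
    exact ⟨⟨c + s, by omega, by push_cast; omega, Or.inl rfl⟩,
      ⟨c + s, by omega, by push_cast; omega, Or.inr rfl⟩⟩
  have hcenter : ∀ c : ℤ, i + 2 ≤ c → c ≤ i + 4 → f (Sum.inl (c : ZMod n)) ≠ 2 := by
    intro c h1 h2
    have := (localRoman_of_rfSum_le hn ⟨hf, hmin⟩ h c (hblock c h1 h2)).a_zero_ne_two
    simpa using this
  exact ⟨hcenter _ le_rfl (by omega), hcenter _ (by omega) le_rfl⟩
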